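/- arXiv:2503.12241 — 4 statements merged into one kernel-verified Lean document; each statement's English description precedes it below -/
import Mathlib

section
/- Let S = ⟨a_1, …, a_k⟩ be a numerical semigroup with minimal generators a_1 < ⋯ < a_k and set A = a_1 + ⋯ + a_k. Then for every x ∈ S, the minimum ∞-length l_∞(x) = min 𝓛_∞(x) satisfies x/A ≤ l_∞(x) ≤ x/A + a_k. -/
open Finset

/-- `Zfac a x`: the set of factorizations of `x` with respect to the generators `a`. -/
def Zfac {k : ℕ} (a : Fin k → ℕ) (x : ℕ) : Set (Fin k → ℕ) :=
  {z | ∑ j, z j * a j = x}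

/-- The `∞`-length of a factorization: the maximum coordinate. -/
def linf {k : ℕ} (z : Fin k → ℕ) : ℕ :=
  Finset.univ.sup z

/-- The `0`-length of a factorization: the size of its support. -/
def lzero {k : ℕ} (z : Fin k → ℕ) : ℕ :=
  (Finset.univ.filter fun i => z i ≠ 0).card

/-- `𝓛∞(x)`: the set of `∞`-lengths of factorizations of `x`. -/
def LinfSet {k : ℕ} (a : Fin k → ℕ) (x : ℕ) : Set ℕ :=
  linf '' Zfac a x

/-- `𝓛∞(x, i)`: `∞`-lengths of factorizations whose maximum coordinate is attained at `i`. -/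
def LinfSetI {k : ℕ} (a : Fin k → ℕ) (x : ℕ) (i : Fin k) : Set ℕ :=
  linf '' {z | z ∈ Zfac a x ∧ z i = linf z}

/-- `𝓛₀(x)`: the set of `0`-lengths of factorizations of `x`. -/
def LzeroSet {k : ℕ} (a : Fin k → ℕ) (x : ℕ) : Set ℕ :=
  lzero '' Zfac a x

/-- The set of differences between consecutive elements of a set `T ⊆ ℕ`. -/
def deltaSet (T : Set ℕ) : Set ℕ :=
  {d | ∃ u ∈ T, ∃ v ∈ T, u < v ∧ v - u = d ∧ ∀ t ∈ T, ¬(u < t ∧ t < v)}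

/-- `Δ∞(x)`. -/
def DeltaInf {k : ℕ} (a : Fin k → ℕ) (x : ℕ) : Set ℕ := deltaSet (LinfSet a x)

/-- `Δ∞(S) = ⋃ x ∈ S, Δ∞(x)` (for `x ∉ S` the contribution is empty). -/
def DeltaInfS {k : ℕ} (a : Fin k → ℕ) : Set ℕ := ⋃ x : ℕ, DeltaInf a x

/-- `Δ₀(x)`. -/
def DeltaZero {k : ℕ} (a : Fin k → ℕ) (x : ℕ) : Set ℕ := deltaSet (LzeroSet a x)

/-- `Δ₀(S) = ⋃ x ∈ S, Δ₀(x)` (for `x ∉ S` the contribution is empty). -/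
def DeltaZeroS {k : ℕ} (a : Fin k → ℕ) : Set ℕ := ⋃ x : ℕ, DeltaZero a x

/-- `a` is a system of minimal generators: no generator is a `ℕ`-combination of the others. -/
def MinimalGens {k : ℕ} (a : Fin k → ℕ) : Prop :=
  ∀ i : Fin k, ¬ ∃ z : Fin k → ℕ, z i = 0 ∧ ∑ j, z j * a j = a i

/-!
Among all factorizations of `x`, take one minimizing `∑ i, z i ^ 2 * a i`. Trading `a j` copies of
the generator `a i` for `a i` copies of `a j` gives another factorization of `x`, and minimality
forces `z i ≤ z j + M`, where `M` bounds the generators. Multiplying by `a j` and summing over `j`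
gives `z i * A ≤ x + M * A`, where `A = ∑ j, a j`; this is the upper bound. The lower bound is
`x = ∑ i, z i * a i ≤ ℓ_∞(z) * A`.
-/

section Energy

variable {ι : Type*} [Fintype ι]

/-- The quadratic form `∑ i, z i ^ 2 * a i`. Weighting each square by its own generator makes
the form of a factorization smallest when its coordinates are nearly equal. -/
def energy (a z : ι → ℕ) : ℕ :=
  z ^ 2 ⬝ᵥ a

lemma energy_add_single [DecidableEq ι] (a r : ι → ℕ) (i : ι) (c : ℕ) :
    energy a (r + Pi.single i c) = energy a r + (2 * r i + c) * c * a i := by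
  have hsq : (r + Pi.single i c) ^ 2 = r ^ 2 + Pi.single i ((2 * r i + c) * c) := by
    ext l
    obtain rfl | hl := eq_or_ne l i
    · simp only [Pi.pow_apply, Pi.add_apply, Pi.single_eq_same]
      ring
    · simp [hl]
  rw [energy, hsq, add_dotProduct, single_dotProduct, energy]

lemma add_single_dotProduct_comm [DecidableEq ι] (a r : ι → ℕ) (i j : ι) :
    (r + Pi.single i (a j)) ⬝ᵥ a = (r + Pi.single j (a i)) ⬝ᵥ a := by
  simp only [add_dotProduct, single_dotProduct, mul_comm]

lemma le_add_max_of_forall_energy_le {a z : ι → ℕ}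
    (hmin : ∀ w, w ⬝ᵥ a = z ⬝ᵥ a → energy a z ≤ energy a w)
    {i j : ι} (hi : 0 < a i) (hj : 0 < a j) : z i ≤ z j + max (a i) (a j) := by
  classical
  obtain rfl | hij := eq_or_ne i j
  · exact Nat.le_add_right _ _
  obtain hlt | hle := lt_or_ge (z i) (a j)
  · omega
  obtain ⟨r, rfl⟩ : ∃ r, z = r + Pi.single i (a j) :=
    ⟨z - Pi.single i (a j),
      (tsub_add_cancel_of_le (update_le_iff.2 ⟨hle, fun _ _ => Nat.zero_le _⟩)).symm⟩
  have henergy := hmin (r + Pi.single j (a i)) (add_single_dotProduct_comm a r j i)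
  rw [energy_add_single, energy_add_single, add_le_add_iff_left] at henergy
  have hcoord : 2 * r i + a j ≤ 2 * r j + a i :=
    le_of_mul_le_mul_right (by linarith) (Nat.mul_pos hi hj)
  simp only [Pi.add_apply, Pi.single_eq_same, Pi.single_eq_of_ne' hij, add_zero]
  omega

end Energy

section Factorizations

variable {k x M : ℕ} {a z : Fin k → ℕ}

lemma MinimalGens.pos (ha : MinimalGens a) (i : Fin k) : 0 < a i :=
  Nat.pos_of_ne_zero fun hi => ha i ⟨0, rfl, by simp [hi]⟩

lemma exists_mem_zfac_forall_le_add (hpos : ∀ i, 0 < a i) (hM : ∀ i, a i ≤ M)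
    (hx : (Zfac a x).Nonempty) : ∃ z ∈ Zfac a x, ∀ i j, z i ≤ z j + M := by
  obtain ⟨z, hz, hmin⟩ := exists_minimalFor_of_wellFoundedLT (· ∈ Zfac a x) (energy a) hx
  have henergy (w : Fin k → ℕ) (hw : w ⬝ᵥ a = z ⬝ᵥ a) : energy a z ≤ energy a w :=
    (le_total _ _).elim id (hmin (hw.trans hz))
  refine ⟨z, hz, fun i j => ?_⟩
  calc z i ≤ z j + max (a i) (a j) := le_add_max_of_forall_energy_le henergy (hpos i) (hpos j)
    _ ≤ z j + M := by gcongr; exact max_le (hM i) (hM j)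

lemma le_linf_mul_sum (hz : z ∈ Zfac a x) : x ≤ linf z * ∑ i, a i :=
  calc x = ∑ i, z i * a i := hz.symm
    _ ≤ ∑ i, linf z * a i := by gcongr with i; exact le_sup (mem_univ i)
    _ = linf z * ∑ i, a i := (mul_sum ..).symm

lemma linf_mul_sum_le (hz : z ∈ Zfac a x) (hbal : ∀ i j, z i ≤ z j + M) :
    linf z * ∑ i, a i ≤ x + M * ∑ i, a i :=
  calc linf z * ∑ i, a i = ∑ j, linf z * a j := mul_sum ..
    _ ≤ ∑ j, (z j + M) * a j := by gcongr with j; exact Finset.sup_le fun i _ => hbal i j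
    _ = ∑ j, z j * a j + M * ∑ j, a j := by simp only [add_mul, sum_add_distrib, mul_sum]
    _ = x + M * ∑ i, a i := congrArg (· + M * ∑ i, a i) hz

end Factorizations

theorem stmt_0_general {k : ℕ} (hk : 0 < k) {a : Fin k → ℕ} (hpos : ∀ i, 0 < a i)
    {M : ℕ} (hM : ∀ i, a i ≤ M) {x : ℕ} (hx : (Zfac a x).Nonempty) :
    (x : ℚ) / (∑ i, a i : ℕ) ≤ (sInf (LinfSet a x) : ℕ) ∧
      ((sInf (LinfSet a x) : ℕ) : ℚ) ≤ (x : ℚ) / (∑ i, a i : ℕ) + M := by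
  have hA : (0 : ℚ) < (∑ i, a i : ℕ) :=
    Nat.cast_pos.2 (sum_pos (fun i _ => hpos i) ⟨⟨0, hk⟩, mem_univ _⟩)
  constructor
  · obtain ⟨z, hz, hlinf⟩ : sInf (LinfSet a x) ∈ LinfSet a x := Nat.sInf_mem (hx.image linf)
    rw [← hlinf, div_le_iff₀ hA]
    exact_mod_cast le_linf_mul_sum hz
  · obtain ⟨z, hz, hbal⟩ := exists_mem_zfac_forall_le_add hpos hM hx
    calc ((sInf (LinfSet a x) : ℕ) : ℚ) ≤ linf z :=
          Nat.cast_le.2 (Nat.sInf_le (Set.mem_image_of_mem linf hz))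
      _ ≤ (x + M * (∑ i, a i : ℕ)) / (∑ i, a i : ℕ) := by
          rw [le_div_iff₀ hA]
          exact_mod_cast linf_mul_sum_le hz hbal
      _ = (x : ℚ) / (∑ i, a i : ℕ) + M := by rw [add_div, mul_div_cancel_right₀ _ hA.ne']

/-- For every `x ∈ S`, the minimum `∞`-length satisfies `x/A ≤ l_∞(x) ≤ x/A + a_k`. -/
theorem stmt_0 (k : ℕ) (hk : 1 ≤ k) (a : Fin k → ℕ)
    (hmono : StrictMono a)
    (hgcd : Finset.univ.gcd a = 1)
    (hmin : MinimalGens a)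
    (A : ℕ) (hA : A = ∑ i, a i)
    (x : ℕ) (hx : (Zfac a x).Nonempty) :
    (x : ℚ) / (A : ℚ) ≤ ((sInf (LinfSet a x) : ℕ) : ℚ) ∧
      ((sInf (LinfSet a x) : ℕ) : ℚ) ≤ (x : ℚ) / (A : ℚ) + (a ⟨k - 1, by omega⟩ : ℚ) := by
  subst hA
  exact stmt_0_general hk hmin.pos (fun i => hmono.monotone (Nat.le_sub_one_of_lt i.isLt)) hx
end

section
/- Let a, b be coprime integers with 2 ≤ a < b, let k ≥ 2, and let S = ⟨a_1, …, a_k⟩ where a_i = a^{k−i} b^{i−1} for i = 1, …, k (generators forming a geometric sequence). Then Δ_∞(S) = {1, 2, …, b}. -/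
open Finset

/-!
Since `a * g (i + 1) = b * g i` for the generators `g i = a ^ (k - 1 - i) * b ^ i`, trading `a`
copies of one generator for `b` copies of the preceding one preserves the element factored. As `a`
and `b` are coprime, such trades connect any two factorizations of an element, and each of them
changes the `∞`-length by at most `max a b = b`. So no gap between consecutive `∞`-lengths exceeds
`b`.

Conversely, for `1 ≤ d ≤ b`, the element `(b - 1) * d * g 1` has factorizations of `∞`-length
`(b - 1) * d` and, after trading `a * d` copies of `g 1`, `b * d`. A length larger than
`(b - 1) * d` can only be attained at the coordinate of `g 0`, which is a multiple of `b`; and no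
multiple of `b` lies strictly between `b * d - d` and `b * d`.
-/

open scoped Matrix

open Relation

section Linf

variable {k : ℕ}

lemma le_linf (z : Fin k → ℕ) (i : Fin k) : z i ≤ linf z :=
  Finset.le_sup (f := z) (Finset.mem_univ i)

lemma linf_le {z : Fin k → ℕ} {c : ℕ} (h : ∀ i, z i ≤ c) : linf z ≤ c :=
  Finset.sup_le fun i _ => h i

lemma linf_mono : Monotone (linf (k := k)) :=
  fun _ _ h => Finset.sup_mono_fun fun i _ => h i

lemma exists_linf_eq [NeZero k] (z : Fin k → ℕ) : ∃ i, linf z = z i := by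
  obtain ⟨i, -, hi⟩ := Finset.exists_mem_eq_sup Finset.univ Finset.univ_nonempty z
  exact ⟨i, hi⟩

lemma linf_add_le (z w : Fin k → ℕ) : linf (z + w) ≤ linf z + linf w :=
  linf_le fun i => add_le_add (le_linf z i) (le_linf w i)

lemma linf_single (i : Fin k) (c : ℕ) : linf (Pi.single i c) = c := by
  refine le_antisymm (linf_le fun l => ?_) ?_
  · rw [Pi.single_apply]
    split_ifs <;> simp
  · simpa using le_linf (Pi.single i c) i

lemma linf_add_single_le (w : Fin k → ℕ) (i j : Fin k) (c d : ℕ) :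
    linf (w + Pi.single i c) ≤ linf (w + Pi.single j d) + c :=
  calc linf (w + Pi.single i c)
      ≤ linf w + linf (Pi.single i c) := linf_add_le _ _
    _ = linf w + c := by rw [linf_single]
    _ ≤ linf (w + Pi.single j d) + c := by gcongr; exact linf_mono le_self_add

lemma linf_single_add_single {i j : Fin k} (hij : i ≠ j) (c d : ℕ) :
    linf (Pi.single i c + Pi.single j d) = max c d := by
  refine le_antisymm (linf_le fun l => ?_) (max_le ?_ ?_)
  · simp only [Pi.add_apply, Pi.single_apply]
    split_ifs <;> omega
  · exact (linf_single i c).symm.trans_le (linf_mono le_self_add)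
  · exact (linf_single j d).symm.trans_le (linf_mono le_add_self)

end Linf

section Factorizations

variable {k x : ℕ} {g z : Fin k → ℕ}

lemma mem_Zfac_iff : z ∈ Zfac g x ↔ z ⬝ᵥ g = x := Iff.rfl

lemma apply_mul_le_of_mem_Zfac (hz : z ∈ Zfac g x) (i : Fin k) : z i * g i ≤ x :=
  hz ▸ Finset.single_le_sum (f := fun j => z j * g j) (fun _ _ => Nat.zero_le _)
    (Finset.mem_univ i)

lemma mem_LinfSet_mul_apply (g : Fin k → ℕ) (i : Fin k) (c : ℕ) : c ∈ LinfSet g (c * g i) :=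
  ⟨Pi.single i c, mem_Zfac_iff.2 (single_dotProduct g c i), linf_single i c⟩

end Factorizations

lemma pos_of_mem_deltaSet {T : Set ℕ} {d : ℕ} (hd : d ∈ deltaSet T) : 0 < d := by
  obtain ⟨u, -, v, -, huv, rfl, -⟩ := hd
  exact Nat.sub_pos_of_lt huv

-- A chain from below a gap of `f '' s` to above it must cross the gap in a single step.
lemma le_of_mem_deltaSet_image {α : Type*} {R : α → α → Prop} {s : Set α} {f : α → ℕ} {N d : ℕ}
    (hconn : ∀ x ∈ s, ∀ y ∈ s, EqvGen R x y)
    (hs : ∀ x y, R x y → (x ∈ s ↔ y ∈ s))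
    (hf : ∀ x y, R x y → f x ≤ f y + N ∧ f y ≤ f x + N)
    (hd : d ∈ deltaSet (f '' s)) : d ≤ N := by
  obtain ⟨_, ⟨x, hx, rfl⟩, _, ⟨y, hy, rfl⟩, hlt, rfl, hgap⟩ := hd
  by_contra! hN
  have same_side : ∀ p q, EqvGen R p q → (p ∈ s ↔ q ∈ s) ∧ (p ∈ s → (f p ≤ f x ↔ f q ≤ f x)) := by
    intro p q hpq
    induction hpq with
    | rel p q hpq =>
      refine ⟨hs p q hpq, fun hp => ?_⟩
      have gap_p := hgap _ ⟨p, hp, rfl⟩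
      have gap_q := hgap _ ⟨q, (hs p q hpq).1 hp, rfl⟩
      have step := hf p q hpq
      omega
    | refl => tauto
    | symm => tauto
    | trans => tauto
  have := ((same_side x y (hconn x hx y hy)).2 hx).1 le_rfl
  omega

/-- The geometric sequence `a ^ (k - 1), a ^ (k - 2) * b, …, b ^ (k - 1)` of generators, indexed
from `0`. -/
def geomGens (a b k : ℕ) : Fin k → ℕ := fun i => a ^ (k - 1 - (i : ℕ)) * b ^ (i : ℕ)

/-- The elementary trades between factorizations with respect to `geomGens a b (k + 1)`: `a` copies
of a generator are replaced by `b` copies of the preceding one. -/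
inductive GeomTrade (a b : ℕ) {k : ℕ} : (Fin (k + 1) → ℕ) → (Fin (k + 1) → ℕ) → Prop
  | mk (w : Fin (k + 1) → ℕ) (i : Fin k) :
      GeomTrade a b (w + Pi.single i.succ a) (w + Pi.single i.castSucc b)

section Generators

variable (a b : ℕ) {k : ℕ}

lemma geomGens_apply_zero (k : ℕ) : geomGens a b (k + 1) 0 = a ^ k := by
  simp [geomGens]

lemma geomGens_apply_castSucc (i : Fin k) :
    geomGens a b (k + 1) i.castSucc = a * geomGens a b k i := by
  have hexp : k + 1 - 1 - (i : ℕ) = k - 1 - (i : ℕ) + 1 := by omega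
  simp only [geomGens, Fin.val_castSucc, hexp, pow_succ']
  ring

lemma geomGens_apply_succ (i : Fin k) :
    geomGens a b (k + 1) i.succ = b * geomGens a b k i := by
  have hexp : k + 1 - 1 - ((i : ℕ) + 1) = k - 1 - (i : ℕ) := by omega
  simp only [geomGens, Fin.val_succ, hexp, pow_succ']
  ring

lemma geomGens_apply_one (k : ℕ) : geomGens a b (k + 2) 1 = b * a ^ k := by
  rw [← Fin.succ_zero_eq_one, geomGens_apply_succ, geomGens_apply_zero]

lemma geomGens_monotone {a b : ℕ} (hab : a ≤ b) : Monotone (geomGens a b (k + 1)) :=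
  Fin.monotone_iff_le_succ.2 fun i => by
    rw [geomGens_apply_castSucc, geomGens_apply_succ]
    exact Nat.mul_le_mul_right _ hab

lemma cons_dotProduct_geomGens (c : ℕ) (z : Fin k → ℕ) :
    (Fin.cons c z : Fin (k + 1) → ℕ) ⬝ᵥ geomGens a b (k + 1)
      = c * a ^ k + b * (z ⬝ᵥ geomGens a b k) := by
  simp only [dotProduct, Fin.sum_univ_succ, Fin.cons_zero, Fin.cons_succ, geomGens_apply_zero,
    geomGens_apply_succ, Finset.mul_sum, mul_left_comm b]

end Generators

lemma cons_add_single_succ (c t : ℕ) (w : Fin k → ℕ) (i : Fin k) :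
    (Fin.cons c w : Fin (k + 1) → ℕ) + Pi.single i.succ t = Fin.cons c (w + Pi.single i t) := by
  funext l
  cases l using Fin.cases <;> simp [Pi.single_apply]

lemma cons_add_single_zero (c t : ℕ) (w : Fin k → ℕ) :
    (Fin.cons c w : Fin (k + 1) → ℕ) + Pi.single 0 t = Fin.cons (c + t) w := by
  funext l
  cases l using Fin.cases <;> simp

section Trades

variable {a b k : ℕ} {z z' : Fin (k + 1) → ℕ}

lemma GeomTrade.dotProduct_eq (h : GeomTrade a b z z') :
    z ⬝ᵥ geomGens a b (k + 1) = z' ⬝ᵥ geomGens a b (k + 1) := by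
  cases h with
  | mk w i =>
    rw [add_dotProduct, add_dotProduct, single_dotProduct, single_dotProduct,
      geomGens_apply_succ, geomGens_apply_castSucc, mul_left_comm]

lemma GeomTrade.linf_le (h : GeomTrade a b z z') :
    linf z ≤ linf z' + max a b ∧ linf z' ≤ linf z + max a b := by
  cases h with
  | mk w i =>
    exact ⟨(linf_add_single_le w _ _ a b).trans (by gcongr; exact le_max_left a b),
      (linf_add_single_le w _ _ b a).trans (by gcongr; exact le_max_right a b)⟩

lemma GeomTrade.cons (h : GeomTrade a b z z') (c : ℕ) :
    GeomTrade a b (Fin.cons c z : Fin (k + 2) → ℕ) (Fin.cons c z') := by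
  cases h with
  | mk w i =>
    rw [← cons_add_single_succ, ← cons_add_single_succ, Fin.succ_castSucc]
    exact .mk _ i.succ

lemma eqvGen_geomTrade_cons (h : EqvGen (GeomTrade a b) z z') (c : ℕ) :
    EqvGen (GeomTrade a b) (Fin.cons c z : Fin (k + 2) → ℕ) (Fin.cons c z') := by
  induction h with
  | rel _ _ h => exact .rel _ _ (h.cons c)
  | refl _ => exact .refl _
  | symm _ _ _ ih => exact ih.symm
  | trans _ _ _ _ _ ih₁ ih₂ => exact ih₁.trans _ _ _ ih₂

lemma eqvGen_geomTrade_add_single (w : Fin (k + 1) → ℕ) (i : Fin k) (m : ℕ) :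
    EqvGen (GeomTrade a b) (w + Pi.single i.succ (a * m)) (w + Pi.single i.castSucc (b * m)) := by
  induction m generalizing w with
  | zero => simpa using EqvGen.refl w
  | succ m ih =>
    have first := EqvGen.rel _ _ (GeomTrade.mk (a := a) (b := b) (w + Pi.single i.succ (a * m)) i)
    have rest := ih (w + Pi.single i.castSucc b)
    rw [add_right_comm] at rest
    have := first.trans _ _ _ rest
    rwa [add_assoc, ← Pi.single_add, add_right_comm, add_assoc, ← Pi.single_add] at this

-- The multiplicities of `a ^ k` agree modulo `b`, so trades make them equal; it then cancels.
theorem eqvGen_geomTrade_of_dotProduct_eq (hb : 0 < b) (hcop : a.Coprime b)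
    (h : z ⬝ᵥ geomGens a b (k + 1) = z' ⬝ᵥ geomGens a b (k + 1)) :
    EqvGen (GeomTrade a b) z z' := by
  induction k with
  | zero =>
    suffices z = z' from this ▸ EqvGen.refl z
    funext i
    rw [Fin.fin_one_eq_zero i]
    simpa [dotProduct, geomGens] using h
  | succ k ih =>
    cases z using Fin.consCases with | cons c z => ?_
    cases z' using Fin.consCases with | cons c' z' => ?_
    wlog hle : c ≤ c' generalizing c c' z z'
    · exact (this _ _ _ _ h.symm (le_of_not_ge hle)).symm
    have hmod : c ≡ c' [MOD b] := by
      refine Nat.ModEq.cancel_right_of_coprime (c := a ^ (k + 1)) (hcop.symm.pow_right _) ?_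
      simpa [Nat.ModEq, cons_dotProduct_geomGens] using congrArg (· % b) h
    obtain ⟨m, hm⟩ := (Nat.modEq_iff_dvd' hle).1 hmod
    obtain rfl : c' = c + b * m := by omega
    have trades := eqvGen_geomTrade_add_single (a := a) (b := b) (Fin.cons c z') 0 m
    rw [cons_add_single_succ, Fin.castSucc_zero, cons_add_single_zero] at trades
    refine (eqvGen_geomTrade_cons (ih ?_) c).trans _ _ _ trades
    rw [cons_dotProduct_geomGens, cons_dotProduct_geomGens] at h
    rw [add_dotProduct, single_dotProduct, geomGens_apply_zero]
    refine Nat.eq_of_mul_eq_mul_left hb ?_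
    linear_combination h

end Trades

theorem le_max_of_mem_DeltaInf_geomGens {a b k x d : ℕ} (hb : 0 < b) (hcop : a.Coprime b)
    (hd : d ∈ DeltaInf (geomGens a b (k + 1)) x) : d ≤ max a b :=
  le_of_mem_deltaSet_image (R := GeomTrade a b)
    (fun _ hz _ hz' => eqvGen_geomTrade_of_dotProduct_eq hb hcop (hz.trans hz'.symm))
    (fun _ _ h => by rw [mem_Zfac_iff, mem_Zfac_iff, h.dotProduct_eq])
    (fun _ _ h => h.linf_le) hd

section LowerBound

variable {a b k : ℕ}

lemma dvd_apply_zero_of_mem_Zfac_geomGens (hcop : a.Coprime b) {x : ℕ} (hx : b ∣ x)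
    {z : Fin (k + 1) → ℕ} (hz : z ∈ Zfac (geomGens a b (k + 1)) x) : b ∣ z 0 := by
  cases z using Fin.consCases with | cons c z => ?_
  rw [mem_Zfac_iff, cons_dotProduct_geomGens] at hz
  have : b ∣ c * a ^ k := (Nat.dvd_add_left (Dvd.intro _ rfl)).1 (hz ▸ hx)
  exact (hcop.symm.pow_right k).dvd_of_dvd_mul_right this

lemma dvd_or_mul_le_of_mem_LinfSet_geomGens (hab : a ≤ b) (hcop : a.Coprime b) {x t : ℕ}
    (hx : b ∣ x) (ht : t ∈ LinfSet (geomGens a b (k + 2)) x) :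
    b ∣ t ∨ t * geomGens a b (k + 2) 1 ≤ x := by
  obtain ⟨z, hz, rfl⟩ := ht
  obtain ⟨i, hi⟩ := exists_linf_eq z
  rw [hi]
  rcases eq_or_ne i 0 with rfl | hi0
  · exact .inl (dvd_apply_zero_of_mem_Zfac_geomGens hcop hx hz)
  · have : geomGens a b (k + 2) 1 ≤ geomGens a b (k + 2) i :=
      geomGens_monotone hab (Fin.one_le_of_ne_zero hi0)
    exact .inr ((Nat.mul_le_mul_left _ this).trans (apply_mul_le_of_mem_Zfac hz i))

lemma mul_mem_LinfSet_geomGens {d t : ℕ} (ht : t ≤ b * d) :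
    b * d ∈ LinfSet (geomGens a b (k + 2)) ((t + a * d) * geomGens a b (k + 2) 1) := by
  refine ⟨Pi.single 1 t + Pi.single 0 (b * d), ?_, ?_⟩
  · rw [mem_Zfac_iff, add_dotProduct, single_dotProduct, single_dotProduct, geomGens_apply_zero,
      geomGens_apply_one]
    ring
  · rw [linf_single_add_single one_ne_zero, max_eq_right ht]

theorem mem_DeltaInf_geomGens (ha : 0 < a) (hab : a < b) (hcop : a.Coprime b) {d : ℕ}
    (hd : 0 < d) (hdb : d ≤ b) :
    d ∈ DeltaInf (geomGens a b (k + 2)) ((b - 1) * d * geomGens a b (k + 2) 1) := by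
  have hb : 0 < b := ha.trans hab
  have hg : 0 < geomGens a b (k + 2) 1 := by rw [geomGens_apply_one]; positivity
  have hbd : b * d = (b - 1) * d + d := by rw [← Nat.add_one_mul, Nat.sub_add_cancel hb]
  have hsplit : (b - 1) * d = (b - 1 - a) * d + a * d := by
    rw [← add_mul, Nat.sub_add_cancel (Nat.le_sub_one_of_lt hab)]
  refine ⟨(b - 1) * d, mem_LinfSet_mul_apply _ 1 _, b * d, ?_, by omega, by omega, ?_⟩
  · rw [hsplit]
    exact mul_mem_LinfSet_geomGens (by omega)
  · rintro t ht ⟨hlo, hhi⟩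
    have hx : b ∣ (b - 1) * d * geomGens a b (k + 2) 1 := by
      rw [geomGens_apply_one]
      exact (Dvd.intro _ rfl).mul_left _
    rcases dvd_or_mul_le_of_mem_LinfSet_geomGens hab.le hcop hx ht with ⟨c, rfl⟩ | hle
    · have hcd : c + 1 ≤ d := Nat.lt_of_mul_lt_mul_left hhi
      have : b * c + b ≤ b * d := Nat.mul_le_mul_left b hcd
      omega
    · exact hlo.not_ge (Nat.le_of_mul_le_mul_right hle hg)

end LowerBound

theorem stmt_8_general (a b k : ℕ) (ha : 0 < a) (hab : a < b) (hcop : Nat.Coprime a b)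
    (hk : 2 ≤ k) : DeltaInfS (geomGens a b k) = Set.Icc 1 b := by
  obtain ⟨m, rfl⟩ := Nat.exists_eq_add_of_le' hk
  ext d
  simp only [DeltaInfS, Set.mem_iUnion, Set.mem_Icc]
  constructor
  · rintro ⟨x, hd⟩
    have hmax := le_max_of_mem_DeltaInf_geomGens (ha.trans hab) hcop hd
    exact ⟨pos_of_mem_deltaSet hd, hmax.trans_eq (max_eq_right hab.le)⟩
  · rintro ⟨hd, hdb⟩
    exact ⟨_, mem_DeltaInf_geomGens ha hab hcop hd hdb⟩

/-- For `S = ⟨a^{k−1}, a^{k−2}b, …, b^{k−1}⟩` with `2 ≤ a < b` coprime,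
`Δ∞(S) = {1, 2, …, b}`. -/
theorem stmt_8 (a b k : ℕ) (ha : 2 ≤ a) (hab : a < b) (hcop : Nat.Coprime a b)
    (hk : 2 ≤ k) :
    DeltaInfS (fun i : Fin k => a ^ (k - 1 - (i : ℕ)) * b ^ (i : ℕ)) = Set.Icc 1 b :=
  stmt_8_general a b k (by omega) hab hcop hk
end

section
/- Fix an integer m ≥ 3 and let S = ⟨3, 3m + 1, 3m + 2⟩. Then Δ_∞(S) = {1, 2, …, m+1} ∪ {2m, 2m+1}. In particular, Δ_∞(S) omits the interval [m+2, 2m−1]. -/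
open Finset

/-!
Put `n = b + c`. A factorization `(a, b, c)` of `x` satisfies `x = 3 (a + m n) + (b + 2 c)`.

*Upper bound.* The exchanges `(a, b + 2, c) → (a + m, b, c + 1)` and
`(a, b, c + 2) → (a + m + 1, b + 1, c)` move the `∞`-length by at most `m + 1`, so they never cross
a longer gap, and they lead to a factorization with `b, c ≤ 1`. The latter is unique, unless
`x = 3 A`, when both `(A, 0, 0)` and `(A - 2 m - 1, 1, 1)` may occur; but `(A, 0, 0)` is reached
only from itself. Hence a gap longer than `m + 1` has `(A, 0, 0)` on top, and its length is `2 m` or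
`2 m + 1`.

*Realization.* If `x` is large, all the lengths near the top are values of `a`, and they come in
bands indexed by `n`. When `x` is `1` modulo `3`, the bands `3 j + 1` and `3 j + 2` are `m + 1 - j`
apart; when `x` is a multiple of `3`, band `1` is empty and bands `0` and `2` are `2 m + 1` apart.
The difference `2 m` comes from the small element `6 m + 3`.
-/

section Gap

variable {k : ℕ} {a : Fin k → ℕ} {x d : ℕ} {y z w w' : Fin k → ℕ}

/-- `IsGap a x y z`: the `∞`-lengths of the factorizations `y` and `z` of `x` are consecutive in
`𝓛∞(x)`, in this order. Gaps are recorded by factorizations attaining their ends, rather than by the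
two lengths. -/
structure IsGap (a : Fin k → ℕ) (x : ℕ) (y z : Fin k → ℕ) : Prop where
  left_mem : y ∈ Zfac a x
  right_mem : z ∈ Zfac a x
  lt : linf y < linf z
  le_or_le : ∀ w ∈ Zfac a x, linf w ≤ linf y ∨ linf z ≤ linf w

theorem mem_DeltaInfS_iff : d ∈ DeltaInfS a ↔ ∃ x y z, IsGap a x y z ∧ linf z - linf y = d := by
  simp only [DeltaInfS, Set.mem_iUnion]
  refine exists_congr fun x => ⟨?_, ?_⟩
  · rintro ⟨_, ⟨y, hy, rfl⟩, _, ⟨z, hz, rfl⟩, hlt, hd, hgap⟩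
    refine ⟨y, z, ⟨hy, hz, hlt, fun w hw => ?_⟩, hd⟩
    have hw_gap := hgap _ ⟨w, hw, rfl⟩
    omega
  · rintro ⟨y, z, h, hd⟩
    refine ⟨_, ⟨y, h.left_mem, rfl⟩, _, ⟨z, h.right_mem, rfl⟩, h.lt, hd, ?_⟩
    rintro _ ⟨w, hw, rfl⟩
    have := h.le_or_le w hw
    omega

/-- `Linked a x d y z`: the factorizations `y` and `z` of `x` are joined by a chain of
factorizations of `x` along which each step changes the `∞`-length by at most `d`. -/
def Linked (a : Fin k → ℕ) (x d : ℕ) : (Fin k → ℕ) → (Fin k → ℕ) → Prop :=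
  Relation.ReflTransGen fun y z =>
    y ∈ Zfac a x ∧ z ∈ Zfac a x ∧ linf y ≤ linf z + d ∧ linf z ≤ linf y + d

theorem Linked.linf_le_iff (h : Linked a x d w w') (hgap : IsGap a x y z)
    (hd : linf y + d < linf z) : linf w ≤ linf y ↔ linf w' ≤ linf y := by
  induction h with
  | refl => rfl
  | @tail v v' _ hstep ih =>
    obtain ⟨hv, hv', hle, hge⟩ := hstep
    have := hgap.le_or_le v hv
    have := hgap.le_or_le v' hv'
    omega

end Gap

theorem linf_fin_three (z : Fin 3 → ℕ) : linf z = max (z 0) (max (z 1) (z 2)) := by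
  simp [linf, Fin.univ_succ]

section ThreeGenerators

variable {m x j : ℕ} {y z : Fin 3 → ℕ}

/-- The generators `3, 3 m + 1, 3 m + 2` of the semigroup under study. -/
abbrev tripleGens (m : ℕ) : Fin 3 → ℕ := ![3, 3 * m + 1, 3 * m + 2]

theorem mem_Zfac_tripleGens :
    z ∈ Zfac (tripleGens m) x ↔ 3 * (z 0 + m * (z 1 + z 2)) + (z 1 + 2 * z 2) = x := by
  have hsum : ∑ i, z i * tripleGens m i =
      3 * (z 0 + m * (z 1 + z 2)) + (z 1 + 2 * z 2) := by
    simp only [Fin.sum_univ_three, tripleGens, Matrix.cons_val]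
    ring
  rw [← hsum]
  rfl

theorem exists_exchange (hm : 1 ≤ m) (hz : z ∈ Zfac (tripleGens m) x)
    (h : 2 ≤ z 1 ∨ 2 ≤ z 2) :
    ∃ y ∈ Zfac (tripleGens m) x, linf z ≤ linf y + (m + 1) ∧ linf y ≤ linf z + (m + 1) ∧
      y 1 + y 2 + 1 = z 1 + z 2 := by
  obtain ⟨n, hn⟩ : ∃ n, z 1 + z 2 = n + 1 := Nat.exists_eq_add_one.2 (by omega)
  rw [mem_Zfac_tripleGens, hn, Nat.mul_succ] at hz
  simp only [mem_Zfac_tripleGens, linf_fin_three]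
  rcases h with h | h
  · have hn' : z 1 - 2 + (z 2 + 1) = n := by omega
    refine ⟨![z 0 + m, z 1 - 2, z 2 + 1], ?_⟩
    simp only [Matrix.cons_val, hn']
    omega
  · have hn' : z 1 + 1 + (z 2 - 2) = n := by omega
    refine ⟨![z 0 + (m + 1), z 1 + 1, z 2 - 2], ?_⟩
    simp only [Matrix.cons_val, hn']
    omega

/-- A factorization is reduced when neither of the exchanges
`(a, b + 2, c) → (a + m, b, c + 1)` and `(a, b, c + 2) → (a + m + 1, b + 1, c)` applies to it. -/
def IsExchangeReduced (z : Fin 3 → ℕ) : Prop :=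
  z 1 ≤ 1 ∧ z 2 ≤ 1

theorem exists_linked_isExchangeReduced (hm : 1 ≤ m) (hz : z ∈ Zfac (tripleGens m) x) :
    ∃ y ∈ Zfac (tripleGens m) x, Linked (tripleGens m) x (m + 1) z y ∧ IsExchangeReduced y ∧
      (y 1 + y 2 = 0 → z 1 + z 2 = 0) := by
  induction hn : z 1 + z 2 generalizing z with
  | zero => exact ⟨z, hz, .refl, ⟨by omega, by omega⟩, fun _ => rfl⟩
  | succ n ih =>
    by_cases hexch : 2 ≤ z 1 ∨ 2 ≤ z 2
    · obtain ⟨w, hw, hle, hge, hwz⟩ := exists_exchange hm hz hexch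
      obtain ⟨y, hy, hlink, hred, hy0⟩ := ih hw (by omega)
      exact ⟨y, hy, .head ⟨hz, hw, hle, hge⟩ hlink, hred, fun h => by have := hy0 h; omega⟩
    · exact ⟨z, hz, .refl, ⟨by omega, by omega⟩, by omega⟩

theorem linf_le_linf_of_isExchangeReduced (hy : y ∈ Zfac (tripleGens m) x)
    (hz : z ∈ Zfac (tripleGens m) x) (hyred : IsExchangeReduced y) (hzred : IsExchangeReduced z)
    (hz0 : z 1 + z 2 ≠ 0) : linf z ≤ linf y := by
  obtain ⟨hy1, hy2⟩ := hyred
  obtain ⟨hz1, hz2⟩ := hzred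
  rw [mem_Zfac_tripleGens] at hy hz
  rw [linf_fin_three, linf_fin_three]
  have htail : y 1 = z 1 ∧ y 2 = z 2 ∨ y 1 = 0 ∧ y 2 = 0 ∧ z 1 = 1 ∧ z 2 = 1 := by
    rcases Nat.le_one_iff_eq_zero_or_eq_one.1 hy2 with h | h <;>
      rcases Nat.le_one_iff_eq_zero_or_eq_one.1 hz2 with h' | h' <;> omega
  rcases htail with ⟨h1, h2⟩ | ⟨hy1, hy2, hz1, hz2⟩
  · rw [h1, h2] at hy ⊢
    omega
  · rw [hy1, hy2] at hy ⊢
    rw [hz1, hz2] at hz ⊢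
    omega

namespace IsGap

theorem tail_eq_zero (h : IsGap (tripleGens m) x y z) (hm : 1 ≤ m)
    (hlong : linf y + (m + 1) < linf z) : z 1 = 0 ∧ z 2 = 0 := by
  by_contra hz
  obtain ⟨y', hy', hyy', hyred, -⟩ := exists_linked_isExchangeReduced hm h.left_mem
  obtain ⟨z', hz', hzz', hzred, hz0⟩ := exists_linked_isExchangeReduced hm h.right_mem
  have hle : linf z' ≤ linf y' :=
    linf_le_linf_of_isExchangeReduced hy' hz' hyred hzred (by omega)
  have hy'_le : linf y' ≤ linf y := (hyy'.linf_le_iff h hlong).1 le_rfl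
  exact h.lt.not_ge ((hzz'.linf_le_iff h hlong).2 (hle.trans hy'_le))

theorem linf_le_add (h : IsGap (tripleGens m) x y z) (hz1 : z 1 = 0) (hz2 : z 2 = 0) :
    linf z ≤ linf y + (2 * m + 1) := by
  have hz : linf z = z 0 := by simp [linf_fin_three, hz1, hz2]
  by_cases hlt : z 0 < 2 * m + 1
  · omega
  have hx := mem_Zfac_tripleGens.1 h.right_mem
  rw [hz1, hz2] at hx
  have hw : ![z 0 - (2 * m + 1), 1, 1] ∈ Zfac (tripleGens m) x := by
    simp only [mem_Zfac_tripleGens, Matrix.cons_val]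
    omega
  have hside := h.le_or_le _ hw
  have hlt := h.lt
  simp only [linf_fin_three ![_, _, _], Matrix.cons_val] at hside
  omega

theorem linf_add_two_mul_le (h : IsGap (tripleGens m) x y z) (hm : 2 ≤ m) (hz1 : z 1 = 0)
    (hz2 : z 2 = 0) : linf y + 2 * m ≤ linf z := by
  have hy := mem_Zfac_tripleGens.1 h.left_mem
  have hz := mem_Zfac_tripleGens.1 h.right_mem
  have hlt := h.lt
  rw [linf_fin_three, linf_fin_three] at hlt ⊢
  rw [hz1, hz2] at hz
  have hy0 : y 1 + y 2 ≠ 0 := by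
    intro hy0
    rw [hy0] at hy
    omega
  obtain ⟨n, hn⟩ : ∃ n, y 1 + y 2 = n + 2 := Nat.exists_eq_add_of_le' (by omega)
  rw [hn, Nat.mul_add m] at hy
  have hmn : 2 * n ≤ m * n := Nat.mul_le_mul_right n hm
  have hhead : y 0 + (2 * n + 1) + 2 * m ≤ z 0 := by omega
  have htail : y 1 ≤ 2 * n + 1 ∧ y 2 ≤ 2 * n + 1 := by omega
  omega

theorem sub_cases (h : IsGap (tripleGens m) x y z) (hm : 1 ≤ m) :
    linf z - linf y ≤ m + 1 ∨ linf z - linf y = 2 * m ∨ linf z - linf y = 2 * m + 1 := by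
  by_cases hshort : linf z ≤ linf y + (m + 1)
  · omega
  obtain ⟨hz1, hz2⟩ := h.tail_eq_zero hm (not_le.1 hshort)
  have hupper := h.linf_le_add hz1 hz2
  rcases hm.eq_or_lt with rfl | hm
  · omega
  · have hlower := h.linf_add_two_mul_le hm hz1 hz2
    omega

end IsGap

theorem four_mul_tail_le (hm : 1 ≤ m) (hz : z ∈ Zfac (tripleGens m) x) :
    4 * (z 1 + z 2) ≤ x := by
  have := Nat.le_mul_of_pos_left (z 1 + z 2) hm
  rw [mem_Zfac_tripleGens] at hz
  omega

/-- The element `12 * M + 1` is large enough for `four_mul_tail_le` to give `w 1 + w 2 ≤ 3 * M` for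
all its factorizations `w`, so that no length above `3 * M` comes from the last two coordinates. -/
theorem isGap_consecutive_bands (hm : 1 ≤ m) (hj : j ≤ m) {M : ℕ}
    (hM : M = m * (3 * j + 2) + (j + 1)) :
    IsGap (tripleGens m) (12 * M + 1) ![3 * M, 3 * j, 2] ![3 * M + (m + 1 - j), 1, 3 * j] := by
  have hjM : 3 * j + 2 ≤ m * (3 * j + 2) := Nat.le_mul_of_pos_left _ hm
  have hband : m * (3 * j + 2) = m * (1 + 3 * j) + m := by ring
  constructor
  case left_mem =>
    simp only [mem_Zfac_tripleGens, Matrix.cons_val]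
    omega
  case right_mem =>
    simp only [mem_Zfac_tripleGens, Matrix.cons_val]
    omega
  case lt =>
    simp only [linf_fin_three, Matrix.cons_val]
    omega
  case le_or_le =>
    intro w hw
    have htail := four_mul_tail_le hm hw
    rw [mem_Zfac_tripleGens] at hw
    simp only [linf_fin_three, Matrix.cons_val]
    rcases le_or_gt (3 * j + 2) (w 1 + w 2) with hn | hn
    · have hmn := Nat.mul_le_mul_left m hn
      have hhead : w 0 ≤ 3 * M := by omega
      omega
    · have hmn : m * (w 1 + w 2) ≤ m * (1 + 3 * j) := Nat.mul_le_mul_left m (by omega)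
      have hhead : 3 * M + (m + 1 - j) ≤ w 0 := by omega
      omega

theorem isGap_top_large (hm : 1 ≤ m) :
    IsGap (tripleGens m) (12 * (2 * m + 1)) ![3 * (2 * m + 1), 1, 1] ![4 * (2 * m + 1), 0, 0] := by
  constructor
  case left_mem =>
    simp only [mem_Zfac_tripleGens, Matrix.cons_val]
    omega
  case right_mem =>
    simp only [mem_Zfac_tripleGens, Matrix.cons_val]
    omega
  case lt =>
    simp only [linf_fin_three, Matrix.cons_val]
    omega
  case le_or_le =>
    intro w hw
    have htail := four_mul_tail_le hm hw
    rw [mem_Zfac_tripleGens] at hw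
    simp only [linf_fin_three, Matrix.cons_val]
    rcases Nat.eq_zero_or_pos (w 1 + w 2) with hn | hn
    · rw [hn] at hw
      omega
    · have hmn : m * 2 ≤ m * (w 1 + w 2) := Nat.mul_le_mul_left m (by omega)
      have hhead : w 0 ≤ 3 * (2 * m + 1) := by omega
      omega

theorem isGap_top_small (hm : 1 ≤ m) :
    IsGap (tripleGens m) (6 * m + 3) ![0, 1, 1] ![2 * m + 1, 0, 0] := by
  constructor
  case left_mem =>
    simp only [mem_Zfac_tripleGens, Matrix.cons_val]
    omega
  case right_mem =>
    simp only [mem_Zfac_tripleGens, Matrix.cons_val]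
    omega
  case lt =>
    simp only [linf_fin_three, Matrix.cons_val]
    omega
  case le_or_le =>
    intro w hw
    rw [mem_Zfac_tripleGens] at hw
    simp only [linf_fin_three, Matrix.cons_val]
    have hn_lt : w 1 + w 2 < 3 := by
      by_contra! hn
      have hmn := Nat.mul_le_mul_left m hn
      omega
    have hn : w 1 + w 2 = 0 ∨ w 1 + w 2 = 2 := by omega
    rcases hn with hn | hn <;> rw [hn] at hw <;> omega

end ThreeGenerators

theorem stmt_11_general (m : ℕ) (hm : 1 ≤ m) :
    DeltaInfS ![3, 3 * m + 1, 3 * m + 2] =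
      Set.Icc 1 (m + 1) ∪ {2 * m, 2 * m + 1} := by
  ext d
  simp only [mem_DeltaInfS_iff, Set.mem_union, Set.mem_Icc, Set.mem_insert_iff,
    Set.mem_singleton_iff]
  constructor
  · rintro ⟨x, y, z, hgap, rfl⟩
    have hpos := hgap.lt
    have hcases := hgap.sub_cases hm
    omega
  · rintro (⟨hd1, hd⟩ | rfl | rfl)
    · refine ⟨_, _, _, isGap_consecutive_bands (j := m + 1 - d) hm (by omega) rfl, ?_⟩
      have := Nat.le_mul_of_pos_left (3 * (m + 1 - d) + 2) hm
      simp only [linf_fin_three, Matrix.cons_val]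
      omega
    · refine ⟨_, _, _, isGap_top_small hm, ?_⟩
      simp only [linf_fin_three, Matrix.cons_val]
      omega
    · refine ⟨_, _, _, isGap_top_large hm, ?_⟩
      simp only [linf_fin_three, Matrix.cons_val]
      omega

/-- For `S = ⟨3, 3m+1, 3m+2⟩` with `m ≥ 3`,
`Δ∞(S) = {1, …, m+1} ∪ {2m, 2m+1}`; in particular it omits `[m+2, 2m−1]`. -/
theorem stmt_11 (m : ℕ) (hm : 3 ≤ m) :
    DeltaInfS ![3, 3 * m + 1, 3 * m + 2] =
      Set.Icc 1 (m + 1) ∪ {2 * m, 2 * m + 1} :=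
  stmt_11_general m (by omega)
end

section
/- Let a, b be coprime integers with 2 ≤ a < b, let k ≥ 2, and let S = ⟨a_1, …, a_k⟩ where a_i = a^{k−i} b^{i−1} for i = 1, …, k (generators forming a geometric sequence). Then Δ_0(S) = {1}. -/
open Finset

/-!
When consecutive generators have ratio `b i / a i`, trading `b i` copies of the `i`-th generator
for `a i` copies of the next one changes the `0`-length of a factorization by at most one. Such
trades lower the factorization lexicographically, so they end in a reduced one, whose `i`-th
coordinate is below `b i` for every `i` but the last. If two factorizations of an element agree
before coordinate `i`, then they agree modulo `b i` there, so each element has only one reduced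
factorization. Any two factorizations are therefore joined by trades, and the `0`-lengths along
the way leave no gap.
-/

section Gaps

lemma one_mem_deltaSet {T : Set ℕ} {t : ℕ} (ht : t ∈ T) (ht' : t + 1 ∈ T) : 1 ∈ deltaSet T :=
  ⟨t, ht, t + 1, ht', t.lt_succ_self, by omega, by omega⟩

lemma deltaSet_subset_one_of_ordConnected {T : Set ℕ} (hT : T.OrdConnected) :
    deltaSet T ⊆ {1} := by
  rintro _ ⟨u, hu, v, hv, huv, rfl, hgap⟩
  have hmem : u + 1 ∈ T := hT.out hu hv ⟨u.le_succ, huv⟩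
  have hnot_lt : ¬u + 1 < v := fun hlt => hgap _ hmem ⟨u.lt_succ_self, hlt⟩
  rw [Set.mem_singleton_iff]
  omega

variable {α : Type*} {s : Set α} {f : α → ℕ} {r : α → α → Prop}

lemma mem_of_reflTransGen (hs : ∀ x y, r x y → x ∈ s → y ∈ s) {x y : α}
    (hxy : Relation.ReflTransGen r x y) (hx : x ∈ s) : y ∈ s := by
  induction hxy with
  | refl => exact hx
  | tail _ hyz hy => exact hs _ _ hyz hy

lemma uIcc_subset_image_of_reflTransGen (hs : ∀ x y, r x y → x ∈ s → y ∈ s)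
    (hf : ∀ x y, r x y → f y ≤ f x + 1 ∧ f x ≤ f y + 1) {x y : α}
    (hxy : Relation.ReflTransGen r x y) (hx : x ∈ s) : Set.uIcc (f x) (f y) ⊆ f '' s := by
  induction hxy with
  | refl => simpa using ⟨x, hx, rfl⟩
  | @tail y z hxy hyz ih =>
    have hy := mem_of_reflTransGen hs hxy hx
    have hz := hs y z hyz hy
    refine Set.uIcc_subset_uIcc_union_uIcc.trans (Set.union_subset ih fun t ht => ?_)
    have hstep := hf y z hyz
    have ht_eq : t = f y ∨ t = f z := by
      rw [Set.mem_uIcc] at ht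
      omega
    rcases ht_eq with rfl | rfl
    exacts [⟨y, hy, rfl⟩, ⟨z, hz, rfl⟩]

lemma ordConnected_image_of_join (hs : ∀ x y, r x y → x ∈ s → y ∈ s)
    (hf : ∀ x y, r x y → f y ≤ f x + 1 ∧ f x ≤ f y + 1)
    (hjoin : ∀ x ∈ s, ∀ y ∈ s, Relation.Join (Relation.ReflTransGen r) x y) :
    (f '' s).OrdConnected := by
  rw [Set.ordConnected_iff_uIcc_subset]
  rintro _ ⟨x, hx, rfl⟩ _ ⟨y, hy, rfl⟩
  obtain ⟨z, hxz, hyz⟩ := hjoin x hx y hy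
  have hx_sub := uIcc_subset_image_of_reflTransGen hs hf hxz hx
  have hy_sub := uIcc_subset_image_of_reflTransGen hs hf hyz hy
  rw [Set.uIcc_comm] at hy_sub
  exact Set.uIcc_subset_uIcc_union_uIcc.trans (Set.union_subset hx_sub hy_sub)

end Gaps

section AddSingle

variable {k : ℕ} {c : Fin k → ℕ} {i : Fin k} {m : ℕ}

lemma filter_add_single_ne_zero (hm : m ≠ 0) :
    (univ.filter fun j => (c + Pi.single i m : Fin k → ℕ) j ≠ 0) =
      insert i (univ.filter fun j => c j ≠ 0) := by
  ext j
  by_cases hj : j = i <;> simp [Pi.single_apply, hj, hm]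

lemma lzero_add_single_of_eq_zero (hc : c i = 0) (hm : m ≠ 0) :
    lzero (c + Pi.single i m) = lzero c + 1 := by
  rw [lzero, filter_add_single_ne_zero hm, card_insert_of_notMem (by simpa using hc), lzero]

lemma lzero_add_single_of_ne_zero (hc : c i ≠ 0) : lzero (c + Pi.single i m) = lzero c := by
  obtain rfl | hm := eq_or_ne m 0
  · simp
  · rw [lzero, filter_add_single_ne_zero hm, insert_eq_of_mem (by simpa using hc), lzero]

lemma lzero_add_single_mem_Icc : lzero (c + Pi.single i m) ∈ Set.Icc (lzero c) (lzero c + 1) := by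
  obtain rfl | hm := eq_or_ne m 0
  · simp
  · by_cases hc : c i = 0
    · simp [lzero_add_single_of_eq_zero hc hm]
    · simp [lzero_add_single_of_ne_zero hc]

lemma sum_add_single_mul (g : Fin k → ℕ) :
    ∑ j, (c + Pi.single i m : Fin k → ℕ) j * g j = ∑ j, c j * g j + m * g i := by
  simp [add_mul, sum_add_distrib, Pi.single_apply]

end AddSingle

/-- The compound sequence of length `k` with parameters `a` and `b`: its `i`-th term is
`b 0 * ⋯ * b (i - 1) * a i * ⋯ * a (k - 2)`, so consecutive terms have ratio `b i / a i`. Only the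
first `k - 1` values of `a` and `b` matter. The geometric sequences are those with `a` and `b`
constant. -/
def compoundSeq (a b : ℕ → ℕ) (k : ℕ) (i : Fin k) : ℕ :=
  (∏ j ∈ Ico (i : ℕ) (k - 1), a j) * ∏ j ∈ range i, b j

/-- `Trade a b z w`: the factorization `w` arises from `z` by trading `b i` copies of some `i`-th
generator for `a i` copies of the next one. The part `c` that is left alone is recorded in order to
avoid subtracting from `z`. -/
def Trade (a b : ℕ → ℕ) {k : ℕ} (z w : Fin k → ℕ) : Prop :=
  ∃ (c : Fin k → ℕ) (i j : Fin k), (j : ℕ) = i + 1 ∧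
    z = c + Pi.single i (b i) ∧ w = c + Pi.single j (a i)

/-- Reduced factorizations, those in which no `Trade` can be made. The last coordinate is
unconstrained. -/
def IsTradeReduced (b : ℕ → ℕ) {k : ℕ} (z : Fin k → ℕ) : Prop :=
  ∀ i : Fin k, (i : ℕ) + 1 < k → z i < b i

variable {a b : ℕ → ℕ} {k x : ℕ} {z w : Fin k → ℕ}

lemma compoundSeq_const (a b k : ℕ) :
    compoundSeq (fun _ => a) (fun _ => b) k =
      fun i : Fin k => a ^ (k - 1 - (i : ℕ)) * b ^ (i : ℕ) := by
  funext i
  simp [compoundSeq]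

lemma mul_compoundSeq_eq_mul_compoundSeq_succ {i j : Fin k} (hij : (j : ℕ) = i + 1) :
    b i * compoundSeq a b k i = a i * compoundSeq a b k j := by
  have hi : (i : ℕ) < k - 1 := by omega
  rw [compoundSeq, compoundSeq, hij, prod_range_succ, prod_eq_prod_Ico_succ_bot hi]
  ring

lemma prod_range_dvd_compoundSeq {i : ℕ} {j : Fin k} (hij : i ≤ j) :
    ∏ l ∈ range i, b l ∣ compoundSeq a b k j :=
  (prod_dvd_prod_of_subset _ _ _ (range_mono hij)).mul_left _

namespace Trade

lemma mem_Zfac (h : Trade a b z w) (hz : z ∈ Zfac (compoundSeq a b k) x) :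
    w ∈ Zfac (compoundSeq a b k) x := by
  obtain ⟨c, i, j, hij, rfl, rfl⟩ := h
  refine Eq.trans ?_ hz
  rw [sum_add_single_mul, sum_add_single_mul, mul_compoundSeq_eq_mul_compoundSeq_succ hij]

lemma lzero_le_add_one_and_le_add_one (h : Trade a b z w) :
    lzero w ≤ lzero z + 1 ∧ lzero z ≤ lzero w + 1 := by
  obtain ⟨c, i, j, -, rfl, rfl⟩ := h
  have hz := lzero_add_single_mem_Icc (c := c) (i := i) (m := b i)
  have hw := lzero_add_single_mem_Icc (c := c) (i := j) (m := a i)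
  rw [Set.mem_Icc] at hz hw
  omega

lemma toLex_lt (hb : ∀ i, 0 < b i) (h : Trade a b z w) : toLex w < toLex z := by
  obtain ⟨c, i, j, hij, rfl, rfl⟩ := h
  have hlt : i < j := by omega
  refine ⟨i, fun l hl => ?_, ?_⟩
  · simp [hl.ne, (hl.trans hlt).ne]
  · simp [hlt.ne, hb]

end Trade

lemma exists_trade_of_not_isTradeReduced (a : ℕ → ℕ) (hz : ¬IsTradeReduced b z) :
    ∃ w, Trade a b z w := by
  simp only [IsTradeReduced, not_forall, not_lt] at hz
  obtain ⟨i, hi, hbi⟩ := hz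
  have hle : Pi.single i (b i) ≤ z := by
    rw [Pi.single, update_le_iff]
    exact ⟨hbi, fun _ _ => Nat.zero_le _⟩
  have hsplit : z = z - Pi.single i (b i) + Pi.single i (b i) := (tsub_add_cancel_of_le hle).symm
  exact ⟨_, _, i, ⟨i + 1, hi⟩, rfl, hsplit, rfl⟩

lemma exists_reflTransGen_trade_isTradeReduced (a : ℕ → ℕ) (hb : ∀ i, 0 < b i) (z : Fin k → ℕ) :
    ∃ w, Relation.ReflTransGen (Trade a b) z w ∧ IsTradeReduced b w := by
  induction h : toLex z using WellFoundedLT.induction generalizing z with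
  | ind _ ih =>
    subst h
    by_cases hz : IsTradeReduced b z
    · exact ⟨z, .refl, hz⟩
    · obtain ⟨y, hzy⟩ := exists_trade_of_not_isTradeReduced a hz
      obtain ⟨w, hyw, hw⟩ := ih _ (hzy.toLex_lt hb) y rfl
      exact ⟨w, .head hzy hyw, hw⟩

lemma mul_modEq_mul_of_mem_Zfac {g : Fin k → ℕ} {n : ℕ} {i : Fin k} (hz : z ∈ Zfac g x)
    (hw : w ∈ Zfac g x) (hne : ∀ j ≠ i, z j = w j ∨ n ∣ g j) :
    z i * g i ≡ w i * g i [MOD n] := by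
  have hrest : ∑ j ∈ univ.erase i, z j * g j ≡ ∑ j ∈ univ.erase i, w j * g j [MOD n] := by
    refine Nat.ModEq.sum fun j hj => ?_
    rcases hne j (ne_of_mem_erase hj) with heq | hdvd
    · rw [heq]
    · exact (Nat.modEq_zero_iff_dvd.2 (hdvd.mul_left _)).trans
        (Nat.modEq_zero_iff_dvd.2 (hdvd.mul_left _)).symm
  have hsum : ∑ j, z j * g j ≡ ∑ j, w j * g j [MOD n] :=
    congrArg (· % n) (Eq.trans hz (Eq.symm hw))
  rw [← add_sum_erase _ _ (mem_univ i), ← add_sum_erase _ _ (mem_univ i)] at hsum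
  exact hrest.add_right_cancel hsum

lemma modEq_of_forall_lt_eq (hb : ∀ i, 0 < b i) (hcop : ∀ i j, i ≤ j → (a j).Coprime (b i))
    (hz : z ∈ Zfac (compoundSeq a b k) x) (hw : w ∈ Zfac (compoundSeq a b k) x)
    {i : Fin k} (hlt : ∀ j < i, z j = w j) : z i ≡ w i [MOD b i] := by
  set A := ∏ l ∈ Ico (i : ℕ) (k - 1), a l
  set B := ∏ l ∈ range i, b l
  have hterm : z i * A * B ≡ w i * A * B [MOD b i * B] := by
    have hdvd : ∀ j ≠ i, z j = w j ∨ b i * B ∣ compoundSeq a b k j := fun j hj =>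
      hj.lt_or_gt.imp (hlt j) fun hij => by
        rw [mul_comm, ← prod_range_succ]
        exact prod_range_dvd_compoundSeq hij
    simpa only [compoundSeq, ← mul_assoc] using mul_modEq_mul_of_mem_Zfac hz hw hdvd
  have hB : B ≠ 0 := prod_ne_zero_iff.2 fun l _ => (hb l).ne'
  have hA : (b i).Coprime A :=
    Nat.Coprime.prod_right fun l hl => (hcop i l (mem_Ico.1 hl).1).symm
  exact (Nat.ModEq.mul_right_cancel' hB hterm).cancel_right_of_coprime hA

lemma IsTradeReduced.eq_of_mem_Zfac (hb : ∀ i, 0 < b i)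
    (hcop : ∀ i j, i ≤ j → (a j).Coprime (b i)) (hz : IsTradeReduced b z)
    (hw : IsTradeReduced b w) (hzx : z ∈ Zfac (compoundSeq a b k) x)
    (hwx : w ∈ Zfac (compoundSeq a b k) x) : z = w := by
  funext i
  induction i using WellFoundedLT.induction with
  | ind i ih =>
    by_cases hi : (i : ℕ) + 1 < k
    · exact (modEq_of_forall_lt_eq hb hcop hzx hwx ih).eq_of_lt_of_lt (hz i hi) (hw i hi)
    · have hlast : compoundSeq a b k i ≠ 0 := by
        rw [compoundSeq, Ico_eq_empty (by omega), prod_empty, one_mul]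
        exact prod_ne_zero_iff.2 fun l _ => (hb l).ne'
      have hne : ∀ j ≠ i, z j = w j ∨ 0 ∣ compoundSeq a b k j := fun j hj => .inl (ih j (by omega))
      have hterm := Nat.modEq_zero_iff.1 (mul_modEq_mul_of_mem_Zfac hzx hwx hne)
      exact mul_right_cancel₀ hlast hterm

lemma join_reflTransGen_trade (hb : ∀ i, 0 < b i) (hcop : ∀ i j, i ≤ j → (a j).Coprime (b i))
    (hz : z ∈ Zfac (compoundSeq a b k) x) (hw : w ∈ Zfac (compoundSeq a b k) x) :
    Relation.Join (Relation.ReflTransGen (Trade a b)) z w := by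
  obtain ⟨z', hzz', hz'⟩ := exists_reflTransGen_trade_isTradeReduced a hb z
  obtain ⟨w', hww', hw'⟩ := exists_reflTransGen_trade_isTradeReduced a hb w
  obtain rfl : z' = w' :=
    hz'.eq_of_mem_Zfac hb hcop hw' (mem_of_reflTransGen (fun _ _ h => h.mem_Zfac) hzz' hz)
      (mem_of_reflTransGen (fun _ _ h => h.mem_Zfac) hww' hw)
  exact ⟨z', hzz', hww'⟩

lemma ordConnected_LzeroSet_compoundSeq (hb : ∀ i, 0 < b i)
    (hcop : ∀ i j, i ≤ j → (a j).Coprime (b i)) :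
    (LzeroSet (compoundSeq a b k) x).OrdConnected :=
  ordConnected_image_of_join (fun _ _ h => h.mem_Zfac)
    (fun _ _ h => h.lzero_le_add_one_and_le_add_one)
    fun _ hz _ hw => join_reflTransGen_trade hb hcop hz hw

lemma one_mem_DeltaZeroS_compoundSeq (ha : 0 < a 0) (hk : 2 ≤ k) :
    1 ∈ DeltaZeroS (compoundSeq a b k) := by
  -- `(1 + b 0) e₀` and `e₀ + a 0 e₁` factor the same element and have `0`-lengths `1` and `2`.
  let i : Fin k := ⟨0, by omega⟩
  let j : Fin k := ⟨1, by omega⟩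
  let e : Fin k → ℕ := Pi.single i 1
  have htrade : Trade a b (e + Pi.single i (b 0)) (e + Pi.single j (a 0)) :=
    ⟨e, i, j, rfl, rfl, rfl⟩
  have hi : lzero (e + Pi.single i (b 0)) = lzero e :=
    lzero_add_single_of_ne_zero (by simp [e])
  have hj : lzero (e + Pi.single j (a 0)) = lzero e + 1 :=
    lzero_add_single_of_eq_zero (by simp [e, i, j]) ha.ne'
  exact Set.mem_iUnion.2 ⟨_, one_mem_deltaSet ⟨_, rfl, hi⟩ ⟨_, htrade.mem_Zfac rfl, hj⟩⟩

theorem stmt_13_general (a b : ℕ → ℕ) (k : ℕ) (ha : 0 < a 0) (hb : ∀ i, 0 < b i)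
    (hcop : ∀ i j, i ≤ j → (a j).Coprime (b i)) (hk : 2 ≤ k) :
    DeltaZeroS (compoundSeq a b k) = {1} := by
  refine Set.Subset.antisymm (Set.iUnion_subset fun x => ?_) ?_
  · exact deltaSet_subset_one_of_ordConnected (ordConnected_LzeroSet_compoundSeq hb hcop)
  · exact Set.singleton_subset_iff.2 (one_mem_DeltaZeroS_compoundSeq ha hk)

/-- For `S = ⟨a^{k−1}, a^{k−2}b, …, b^{k−1}⟩` with `2 ≤ a < b` coprime, `Δ₀(S) = {1}`. -/
theorem stmt_13 (a b k : ℕ) (ha : 2 ≤ a) (hab : a < b) (hcop : Nat.Coprime a b)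
    (hk : 2 ≤ k) :
    DeltaZeroS (fun i : Fin k => a ^ (k - 1 - (i : ℕ)) * b ^ (i : ℕ)) = {1} := by
  rw [← compoundSeq_const]
  exact stmt_13_general _ _ k (by omega) (fun _ => by omega) (fun _ _ _ => hcop) hk
end
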